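/- For z, w ∈ H₊, write x = Re z. With f(s) = Γ(α+1)^{-1} s^{α+1} 1_{(0,1)}(s), K = K_f, R(z) = K(z,z), and C(z) = ∫_{H₊} |K(z,w)|²/(K(z,z)) · 1/(z-w) dA(w), one has R(z)C(z) = -L₁(z) + L₂(z), where L₁(z) = R(z) ∫₀^∞ f(s) s^{-(α+1)} Γ(α+1, 2xs) ds and L₂(z) = (2x)^α ∫₀^∞ ∫₀^t f(s) f(t) e^{-2xt} s^{-(α+1)} Γ(α+1) ds dt. -/

import Mathlib

open MeasureTheory Complex

/-- The density `f(s) = Γ(α+1)⁻¹ s^{α+1} 1_{(0,1)}(s)`. -/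
noncomputable def hardWallDensityFn (α : ℝ) (s : ℝ) : ℝ :=
  if s ∈ Set.Ioo (0 : ℝ) 1 then s ^ (α + 1) / Real.Gamma (α + 1) else 0

/-- The limiting hard-wall kernel `K = K_f` with `f = hardWallDensityFn α`. -/
noncomputable def hardWallK (α : ℝ) (z w : ℂ) : ℂ :=
  (((2 * z.re) ^ (α / 2) * (2 * w.re) ^ (α / 2) : ℝ) : ℂ) *
    ∫ t in Set.Ioi (0 : ℝ),
      ((hardWallDensityFn α t : ℝ) : ℂ) * Complex.exp (-(t : ℂ) * (z + (starRingEnd ℂ) w))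

/-- The Cauchy transform `C(z) = ∫_{H₊} |K(z,w)|²/K(z,z) · 1/(z-w) dA(w)`. -/
noncomputable def hardWallCauchy (α : ℝ) (z : ℂ) : ℂ :=
  (1 / (Real.pi : ℂ)) *
    ∫ w in {w : ℂ | 0 < w.re},
      ((‖hardWallK α z w‖ ^ 2 : ℝ) : ℂ) / hardWallK α z z * (1 / (z - w))

/-- The upper incomplete gamma function `Γ(a,y) = ∫_y^∞ t^{a-1} e^{-t} dt`. -/
noncomputable def upperGamma (a y : ℝ) : ℝ :=
  ∫ t in Set.Ioi y, t ^ (a - 1) * Real.exp (-t)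

/-- `L₁(z) = R(z) ∫₀^∞ f(s) s^{-(α+1)} Γ(α+1, 2xs) ds` with `x = Re z`. -/
noncomputable def hardWallL1 (α : ℝ) (z : ℂ) : ℂ :=
  hardWallK α z z *
    ((∫ s in Set.Ioi (0 : ℝ),
      hardWallDensityFn α s * s ^ (-(α + 1)) * upperGamma (α + 1) (2 * z.re * s) : ℝ) : ℂ)

/-- `L₂(z) = (2x)^α ∫₀^∞ ∫₀^t f(s) f(t) e^{-2xt} s^{-(α+1)} Γ(α+1) ds dt`. -/
noncomputable def hardWallL2 (α : ℝ) (z : ℂ) : ℂ :=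
  (((2 * z.re) ^ α : ℝ) : ℂ) *
    ((∫ t in Set.Ioi (0 : ℝ), ∫ s in Set.Ioc (0 : ℝ) t,
      hardWallDensityFn α s * hardWallDensityFn α t * Real.exp (-(2 * z.re * t)) *
        s ^ (-(α + 1)) * Real.Gamma (α + 1) : ℝ) : ℂ)

open Set Filter
open scoped FourierTransform Convolution ContDiff

/-!
Write `w = u + i(Im z - η)`, so that `z + conj w = (x + u) + iη` and `z - w = (x - u) + iη` with
`x = Re z`. On the vertical line `Re p = x + u` the Laplace transform of `f` is the Fourier
transform of `f(t) e^{-(x+u)t}`, and `1 / ((x - u) + iη)` is the Fourier transform of a one-sided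
exponential, supported on `[0, ∞)` for `u < x` and on `(-∞, 0)` for `u > x`. Parseval therefore
evaluates the integral over `η`, and the exponentials combine to
`e^{-2xt} e^{-2us} (1_{s ≤ t} - 1_{x < u})`. In the integral over `u` the first indicator leaves the
complete Gamma function, which gives `L₂`, and the second the incomplete one, which gives `L₁`. All
applications of Fubini's theorem rest on the integrability of `f` and `f²` against `s^{-(α+1)}`.
-/

local notation "μ₊" => Measure.restrict (volume : Measure ℝ) (Ioi (0 : ℝ))

section Plancherel

variable {E F : Type*} [NormedAddCommGroup E] [InnerProductSpace ℝ E] [FiniteDimensional ℝ E]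
  [MeasurableSpace E] [BorelSpace E] [NormedAddCommGroup F] [InnerProductSpace ℂ F]
  [CompleteSpace F]

lemma coeFn_fourier_toLp_ae_eq {h : E → F} (hL1 : Integrable h) (hL2 : MemLp h 2) :
    ⇑(𝓕 (hL2.toLp h) : Lp (α := E) F 2) =ᵐ[volume] 𝓕 h := by
  have hcont : Continuous (𝓕 h) :=
    VectorFourier.fourierIntegral_continuous Real.continuous_fourierChar continuous_inner hL1
  refine ae_eq_of_integral_contDiff_smul_eq
    ((Lp.memLp _).locallyIntegrable one_le_two) hcont.locallyIntegrable fun g hg hgc => ?_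
  let φ : SchwartzMap E ℂ := (hgc.comp_left Complex.ofReal_zero).toSchwartzMap
    (Complex.ofRealCLM.contDiff.comp hg)
  have hφ (x : E) (v : F) : φ x • v = g x • v := Complex.coe_smul (g x) v
  have hdist := congrArg (fun T => T φ)
    (Lp.fourier_toTemperedDistribution_eq (hL2.toLp h))
  have hflip : ∫ x, 𝓕 (⇑φ) x • h x = ∫ x, φ x • 𝓕 h x := by
    simpa using! VectorFourier.integral_fourierIntegral_smul_eq_flip
      (L := innerₗ E) Real.continuous_fourierChar continuous_inner φ.integrable hL1
  simp_rw [← hφ]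
  calc ∫ x, φ x • (𝓕 (hL2.toLp h) : Lp (α := E) F 2 volume) x
      = ∫ x, 𝓕 (⇑φ) x • hL2.toLp h x := by
        simpa [Lp.toTemperedDistribution_apply] using! hdist.symm
    _ = ∫ x, 𝓕 (⇑φ) x • h x := integral_congr_ae <| by
      filter_upwards [hL2.coeFn_toLp] with x hx
      rw [hx]
    _ = ∫ x, φ x • 𝓕 h x := hflip

lemma memLp_two_fourier {h : E → F} (hL1 : Integrable h) (hL2 : MemLp h 2) : MemLp (𝓕 h) 2 :=
  (memLp_congr_ae (coeFn_fourier_toLp_ae_eq hL1 hL2)).1 (Lp.memLp _)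

lemma integral_inner_fourier_fourier {g h : E → F} (hg1 : Integrable g) (hg2 : MemLp g 2)
    (hh1 : Integrable h) (hh2 : MemLp h 2) :
    ∫ ξ, inner ℂ (𝓕 g ξ) (𝓕 h ξ) = ∫ x, inner ℂ (g x) (h x) := by
  have hL2 := Lp.inner_fourier_eq (hg2.toLp g) (hh2.toLp h)
  rw [L2.inner_def, L2.inner_def] at hL2
  refine Eq.trans (integral_congr_ae ?_) (hL2.trans (integral_congr_ae ?_))
  · filter_upwards [coeFn_fourier_toLp_ae_eq hg1 hg2, coeFn_fourier_toLp_ae_eq hh1 hh2]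
      with ξ hg hh
    rw [hg, hh]
  · filter_upwards [hg2.coeFn_toLp, hh2.coeFn_toLp] with x hg hh
    rw [hg, hh]

end Plancherel

lemma memLp_two_of_integrable_of_norm_le {X F : Type*} [MeasurableSpace X] {μ : Measure X}
    [NormedAddCommGroup F] {h : X → F} {C : ℝ} (hL1 : Integrable h μ) (hb : ∀ x, ‖h x‖ ≤ C) :
    MemLp h 2 μ := by
  rw [memLp_two_iff_integrable_sq_norm hL1.aestronglyMeasurable]
  simpa only [sq] using hL1.norm.bdd_mul hL1.norm.aestronglyMeasurable
    (Eventually.of_forall fun x => (norm_norm (h x)).trans_le (hb x))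

lemma integral_conj_fourier_mul_fourier_mul_fourier {h k : ℝ → ℂ} {C : ℝ} (hh1 : Integrable h)
    (hh2 : MemLp h 2) (hk : Integrable k) (hkb : ∀ τ, ‖k τ‖ ≤ C) :
    ∫ ξ, (starRingEnd ℂ) (𝓕 h ξ) * (𝓕 h ξ * 𝓕 k ξ)
      = ∫ t, (starRingEnd ℂ) (h t) * ∫ s, h s * k (t - s) := by
  set H : ℝ → ℂ := h ⋆[ContinuousLinearMap.mul ℂ ℂ] k with hH
  have hH1 : Integrable H := hh1.integrable_convolution _ hk
  have hHb : ∀ t, ‖H t‖ ≤ (∫ s, ‖h s‖) * C := fun t => by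
    rw [← integral_mul_const]
    refine norm_integral_le_of_norm_le (hh1.norm.mul_const C) (Eventually.of_forall fun s => ?_)
    rw [ContinuousLinearMap.mul_apply', norm_mul]
    exact mul_le_mul_of_nonneg_left (hkb _) (norm_nonneg _)
  have hparseval := integral_inner_fourier_fourier hh1 hh2 hH1
    (memLp_two_of_integrable_of_norm_le hH1 hHb)
  simp_rw [hH, Real.fourier_mul_convolution_eq hh1 hk] at hparseval
  simpa [mul_comm, convolution] using hparseval

lemma integrableOn_one_div_sub_ball (z : ℂ) (r : ℝ) :
    IntegrableOn (fun w => 1 / (z - w)) (Metric.ball z r) := by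
  have hinv : IntegrableOn (fun w : ℂ => ‖w‖⁻¹) (Metric.ball (0 : ℂ) r) := by
    rw [integrableOn_fun_norm_addHaar volume (f := fun r : ℝ => r⁻¹),
      Complex.finrank_real_complex]
    refine (integrableOn_const (C := (1 : ℝ)) (by simp)).congr_fun (fun ρ hρ => ?_)
      measurableSet_Ioo
    simp [hρ.1.ne']
  rw [← integrable_indicator_iff measurableSet_ball] at hinv ⊢
  have hm : Measurable fun w : ℂ => 1 / (z - w) := by fun_prop
  refine (hinv.comp_sub_left z).mono' (hm.indicator measurableSet_ball).aestronglyMeasurable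
    (Eventually.of_forall fun w => ?_)
  by_cases hw : ‖z - w‖ < r <;> simp [indicator, dist_eq_norm, norm_sub_rev w z, hw]

lemma integrableOn_mul_one_div_sub {s : Set ℂ} {g : ℂ → ℂ} {z : ℂ} {r C : ℝ} (hr : 0 < r)
    (hs : MeasurableSet s) (hg : IntegrableOn g s)
    (hgb : ∀ w ∈ s ∩ Metric.ball z r, ‖g w‖ ≤ C) :
    IntegrableOn (fun w => g w * (1 / (z - w))) s := by
  have hm : Measurable fun w : ℂ => 1 / (z - w) := by fun_prop
  rw [← inter_union_sdiff s (Metric.ball z r), integrableOn_union]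
  constructor
  · refine Integrable.bdd_mul (c := C)
      ((integrableOn_one_div_sub_ball z r).mono_set inter_subset_right)
      (hg.mono_set inter_subset_left).aestronglyMeasurable ?_
    exact (ae_restrict_mem (hs.inter measurableSet_ball)).mono hgb
  · refine Integrable.mul_bdd (c := r⁻¹) (hg.mono_set sdiff_subset) hm.aestronglyMeasurable ?_
    filter_upwards [ae_restrict_mem (hs.diff measurableSet_ball)] with w hw
    rw [norm_div, norm_one, one_div]
    refine inv_anti₀ hr ?_
    simpa [dist_eq_norm, norm_sub_rev] using hw.2

/-- The decaying fundamental solution of `(d/dτ + a) k = δ₀` (for `a ≠ 0`): the inverse Fourier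
transform of `ξ ↦ 1 / (a + 2πiξ)`. It is supported on the side of `0` where `e^{-aτ}` decays. -/
noncomputable def resolventKernel (a : ℝ) : ℝ → ℝ :=
  if 0 < a then (Ici 0).indicator fun τ => Real.exp (-(a * τ))
  else (Iio 0).indicator fun τ => -Real.exp (-(a * τ))

lemma norm_resolventKernel_le_one (a τ : ℝ) : ‖resolventKernel a τ‖ ≤ 1 := by
  have hexp (h : 0 ≤ a * τ) : Real.exp (-(a * τ)) ≤ 1 := Real.exp_le_one_iff.2 (neg_nonpos.2 h)
  rw [resolventKernel]
  split_ifs with ha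
  · by_cases hτ : 0 ≤ τ
    · simpa [hτ] using hexp (mul_nonneg ha.le hτ)
    · simp [hτ]
  · by_cases hτ : τ < 0
    · simpa [hτ] using hexp (mul_nonneg_of_nonpos_of_nonpos (not_lt.1 ha) hτ.le)
    · simp [hτ]

lemma integrable_resolventKernel {a : ℝ} (ha : a ≠ 0) : Integrable (resolventKernel a) := by
  rw [resolventKernel]
  split_ifs with hpos
  · rw [integrable_indicator_iff measurableSet_Ici, integrableOn_Ici_iff_integrableOn_Ioi]
    simpa only [neg_mul] using integrableOn_exp_mul_Ioi (neg_lt_zero.2 hpos) 0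
  · have hneg : 0 < -a := neg_pos.2 (lt_of_le_of_ne (not_lt.1 hpos) ha)
    rw [integrable_indicator_iff measurableSet_Iio]
    refine Integrable.neg ?_
    simpa only [neg_mul] using!
      (integrableOn_exp_mul_Iic hneg 0).mono_set Iio_subset_Iic_self

lemma fourier_resolventKernel {a : ℝ} (ha : a ≠ 0) (ξ : ℝ) :
    𝓕 (fun τ => (resolventKernel a τ : ℂ)) ξ = 1 / (a + (2 * Real.pi * ξ : ℝ) * I) := by
  set c : ℂ := -(a + (2 * Real.pi * ξ : ℝ) * I) with hc
  have hcre : c.re = -a := by simp [hc]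
  have hexp (τ : ℝ) : cexp (↑(-2 * Real.pi * τ * ξ) * I) * ((Real.exp (-(a * τ)) : ℝ) : ℂ)
      = cexp (c * τ) := by
    rw [ofReal_exp, ← Complex.exp_add, hc]
    congr 1
    push_cast
    ring
  rw [Real.fourier_real_eq_integral_exp_smul, resolventKernel]
  split_ifs with hpos
  · calc _ = ∫ τ, (Ici (0 : ℝ)).indicator (fun τ : ℝ => cexp (c * τ)) τ := by
          congr 1 with τ
          by_cases hτ : τ ∈ Ici (0 : ℝ) <;> simp [hτ, ← hexp, -mem_Ici, -ofReal_exp]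
      _ = _ := by
          rw [integral_indicator measurableSet_Ici, integral_Ici_eq_integral_Ioi,
            integral_exp_mul_complex_Ioi (by linarith), ofReal_zero, mul_zero, Complex.exp_zero, hc,
            neg_div_neg_eq]
  · have hneg : a < 0 := lt_of_le_of_ne (not_lt.1 hpos) ha
    calc _ = ∫ τ, (Iio (0 : ℝ)).indicator (fun τ : ℝ => -cexp (c * τ)) τ := by
          congr 1 with τ
          by_cases hτ : τ ∈ Iio (0 : ℝ) <;> simp [hτ, ← hexp, -mem_Iio, -ofReal_exp]
      _ = _ := by
          rw [integral_indicator measurableSet_Iio, integral_neg, ← integral_Iic_eq_integral_Iio,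
            integral_exp_mul_complex_Iic (by linarith), ofReal_zero, mul_zero, Complex.exp_zero, hc,
            div_neg, neg_neg]

/-- The Laplace transform `∫₀^∞ f(t) e^{-tp} dt` of a real density. -/
noncomputable def laplaceTransform (f : ℝ → ℝ) (p : ℂ) : ℂ :=
  ∫ t in Ioi (0 : ℝ), (f t : ℂ) * cexp (-(t : ℂ) * p)

section LaplaceTransform

variable {f : ℝ → ℝ} {q : ℝ}

lemma measurable_laplaceTransform (hf : AEStronglyMeasurable f μ₊) :
    Measurable (laplaceTransform f) := by
  have hjoint : Measurable fun y : ℂ × ℝ =>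
      ((hf.mk f y.2 : ℝ) : ℂ) * cexp (-(y.2 : ℂ) * y.1) := by
    have := hf.stronglyMeasurable_mk.measurable
    fun_prop
  have hmk : laplaceTransform f
      = fun p => ∫ t in Ioi (0 : ℝ), ((hf.mk f t : ℝ) : ℂ) * cexp (-(t : ℂ) * p) := by
    ext p
    refine integral_congr_ae ?_
    filter_upwards [hf.ae_eq_mk] with t ht
    rw [ht]
  rw [hmk]
  exact hjoint.stronglyMeasurable.integral_prod_right.measurable

lemma norm_laplaceTransform_le {p : ℂ} (hp : q ≤ p.re)
    (hL1 : IntegrableOn (fun t => f t * Real.exp (-(q * t))) (Ioi 0)) :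
    ‖laplaceTransform f p‖ ≤ ∫ t in Ioi 0, ‖f t * Real.exp (-(q * t))‖ := by
  refine norm_integral_le_of_norm_le hL1.norm ?_
  filter_upwards [ae_restrict_mem measurableSet_Ioi] with t (ht : 0 < t)
  rw [norm_mul, norm_mul, norm_real, Complex.norm_exp, Real.norm_of_nonneg (Real.exp_pos _).le]
  gcongr
  simpa [mul_comm] using mul_le_mul_of_nonneg_left hp ht.le

/-- The function `f(t) e^{-qt} 1_{t > 0}`, whose Fourier transform is the restriction of the
Laplace transform of `f` to the vertical line `Re p = q`. -/
noncomputable def dampedDensity (f : ℝ → ℝ) (q : ℝ) : ℝ → ℂ :=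
  (Ioi 0).indicator fun t => ((f t * Real.exp (-(q * t)) : ℝ) : ℂ)

lemma integrable_dampedDensity (hL1 : IntegrableOn (fun t => f t * Real.exp (-(q * t))) (Ioi 0)) :
    Integrable (dampedDensity f q) :=
  (integrable_indicator_iff measurableSet_Ioi).2 hL1.ofReal

lemma memLp_two_dampedDensity
    (hL2 : MemLp (fun t => f t * Real.exp (-(q * t))) 2 μ₊) :
    MemLp (dampedDensity f q) 2 :=
  (memLp_indicator_iff_restrict measurableSet_Ioi).2 hL2.ofReal

lemma fourier_dampedDensity (f : ℝ → ℝ) (q ξ : ℝ) :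
    𝓕 (dampedDensity f q) ξ = laplaceTransform f (q + (2 * Real.pi * ξ : ℝ) * I) := by
  rw [Real.fourier_real_eq_integral_exp_smul, laplaceTransform,
    ← integral_indicator measurableSet_Ioi]
  congr 1 with t
  by_cases ht : t ∈ Ioi (0 : ℝ)
  · rw [dampedDensity, indicator_of_mem ht, indicator_of_mem ht, smul_eq_mul, ofReal_mul (f t),
      mul_left_comm, ofReal_exp, ← Complex.exp_add]
    push_cast
    congr 2
    ring
  · simp [dampedDensity, indicator_of_notMem ht]

lemma integral_eq_two_pi_smul_integral_comp_mul {E : Type*} [NormedAddCommGroup E]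
    [NormedSpace ℝ E] (g : ℝ → E) :
    ∫ η, g η = (2 * Real.pi) • ∫ ξ, g (2 * Real.pi * ξ) := by
  rw [Measure.integral_comp_mul_left, abs_of_pos (by positivity), smul_inv_smul₀ (by positivity)]

lemma integrable_norm_laplaceTransform_sq
    (hL1 : IntegrableOn (fun t => f t * Real.exp (-(q * t))) (Ioi 0))
    (hL2 : MemLp (fun t => f t * Real.exp (-(q * t))) 2 μ₊) :
    Integrable fun η : ℝ => ‖laplaceTransform f (q + η * I)‖ ^ 2 := by
  rw [← integrable_comp_mul_left_iff _ (show 2 * Real.pi ≠ 0 by positivity)]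
  simp_rw [← fourier_dampedDensity]
  exact (memLp_two_fourier (integrable_dampedDensity hL1)
    (memLp_two_dampedDensity hL2)).integrable_norm_pow two_ne_zero

lemma integral_norm_laplaceTransform_sq
    (hL1 : IntegrableOn (fun t => f t * Real.exp (-(q * t))) (Ioi 0))
    (hL2 : MemLp (fun t => f t * Real.exp (-(q * t))) 2 μ₊) :
    ∫ η : ℝ, ‖laplaceTransform f (q + η * I)‖ ^ 2
      = 2 * Real.pi * ∫ t in Ioi 0, (f t * Real.exp (-(q * t))) ^ 2 := by
  have hplancherel : ∫ ξ, ((‖𝓕 (dampedDensity f q) ξ‖ ^ 2 : ℝ) : ℂ)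
      = ∫ t, ((‖dampedDensity f q t‖ ^ 2 : ℝ) : ℂ) := by
    simpa [inner_self_eq_norm_sq_to_K] using integral_inner_fourier_fourier
      (integrable_dampedDensity hL1) (memLp_two_dampedDensity hL2)
      (integrable_dampedDensity hL1) (memLp_two_dampedDensity hL2)
  rw [integral_complex_ofReal, integral_complex_ofReal, ofReal_inj] at hplancherel
  simp_rw [fourier_dampedDensity] at hplancherel
  rw [integral_eq_two_pi_smul_integral_comp_mul, smul_eq_mul,
    ← integral_indicator measurableSet_Ioi, hplancherel]
  congr 2 with t
  by_cases ht : t ∈ Ioi (0 : ℝ) <;>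
    simp [dampedDensity, ht, mul_pow, abs_of_pos, Real.exp_pos, -ofReal_exp, -mem_Ioi]

lemma integral_norm_laplaceTransform_sq_mul_one_div {a : ℝ} (ha : a ≠ 0)
    (hL1 : IntegrableOn (fun t => f t * Real.exp (-(q * t))) (Ioi 0))
    (hL2 : MemLp (fun t => f t * Real.exp (-(q * t))) 2 μ₊) :
    ∫ η : ℝ, ((‖laplaceTransform f (q + η * I)‖ ^ 2 : ℝ) : ℂ) * (1 / (a + η * I))
      = ((2 * Real.pi * ∫ t in Ioi 0, ∫ s in Ioi 0, f t * Real.exp (-(q * t)) *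
          (f s * Real.exp (-(q * s)) * resolventKernel a (t - s)) : ℝ) : ℂ) := by
  have hparseval := integral_conj_fourier_mul_fourier_mul_fourier (integrable_dampedDensity hL1)
    (memLp_two_dampedDensity hL2) (k := fun τ => (resolventKernel a τ : ℂ))
    (integrable_resolventKernel ha).ofReal
    (fun τ => (norm_real _).trans_le (norm_resolventKernel_le_one a τ))
  simp_rw [fourier_dampedDensity, fourier_resolventKernel ha, ← mul_assoc,
    ← normSq_eq_conj_mul_self, normSq_eq_norm_sq] at hparseval
  rw [integral_eq_two_pi_smul_integral_comp_mul, hparseval, Complex.real_smul, ofReal_mul (2 * _)]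
  congr 1
  rw [← integral_indicator measurableSet_Ioi, ← integral_complex_ofReal]
  congr 1 with t
  by_cases ht : t ∈ Ioi (0 : ℝ)
  · rw [dampedDensity, indicator_of_mem ht, indicator_of_mem ht, conj_ofReal,
      integral_const_mul, ← integral_indicator measurableSet_Ioi, ofReal_mul (_ * _) (∫ _, _),
      ← integral_complex_ofReal]
    congr 2 with s
    by_cases hs : s ∈ Ioi (0 : ℝ) <;> simp [hs, -mem_Ioi]
  · simp [dampedDensity, indicator_of_notMem ht]

end LaplaceTransform

section GammaWeight

variable {α : ℝ} {f : ℝ → ℝ}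

lemma upperGamma_zero {a : ℝ} (ha : 0 < a) : upperGamma a 0 = Real.Gamma a := by
  simp_rw [upperGamma, Real.Gamma_eq_integral ha, mul_comm]

lemma integral_Ioi_rpow_mul_exp_neg (α : ℝ) {s c : ℝ} (hs : 0 < s) (hc : 0 ≤ c) :
    ∫ u in Ioi c, (2 * u) ^ α * Real.exp (-(2 * s * u))
      = 1 / 2 * (s ^ (-(α + 1)) * upperGamma (α + 1) (2 * c * s)) := by
  calc ∫ u in Ioi c, (2 * u) ^ α * Real.exp (-(2 * s * u))
      = ∫ u in Ioi c, s ^ (-α) * ((2 * s * u) ^ α * Real.exp (-(2 * s * u))) := by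
        refine setIntegral_congr_fun measurableSet_Ioi fun u hu => ?_
        have hu0 : 0 ≤ u := hc.trans (le_of_lt hu)
        rw [show 2 * s * u = s * (2 * u) by ring, Real.mul_rpow hs.le (by positivity), mul_assoc,
          ← mul_assoc (s ^ (-α)), ← Real.rpow_add hs, neg_add_cancel, Real.rpow_zero, one_mul]
    _ = s ^ (-α) * ((2 * s)⁻¹ * upperGamma (α + 1) (2 * s * c)) := by
        rw [integral_const_mul, integral_comp_mul_left_Ioi (fun y => y ^ α * Real.exp (-y)) c
          (by positivity), upperGamma, add_sub_cancel_right, smul_eq_mul]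
    _ = 1 / 2 * (s ^ (-(α + 1)) * upperGamma (α + 1) (2 * c * s)) := by
        rw [neg_add, Real.rpow_add hs, Real.rpow_neg_one, mul_inv, mul_right_comm 2 c s]
        ring

lemma integrableOn_Ioi_rpow_mul_exp_neg (hα : -1 < α) {s : ℝ} (hs : 0 < s) :
    IntegrableOn (fun u => (2 * u) ^ α * Real.exp (-(2 * s * u))) (Ioi 0) := by
  have h := (integrableOn_rpow_mul_exp_neg_mul_rpow hα one_pos
    (show 0 < 2 * s by positivity)).const_mul (2 ^ α)
  refine IntegrableOn.congr_fun h (fun u hu => ?_) measurableSet_Ioi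
  simp only [Real.mul_rpow zero_le_two (le_of_lt hu), Real.rpow_one, neg_mul, mul_assoc]

lemma integrable_rpow_mul_exp_neg_mul_prod {Y : Type*} [MeasurableSpace Y] {ν : Measure Y}
    [SFinite ν] {σ φ : Y → ℝ} (hα : -1 < α) (hσ : Measurable σ) (hσ0 : ∀ᵐ y ∂ν, 0 < σ y)
    (hφ : AEStronglyMeasurable φ ν) (hint : Integrable (fun y => φ y * σ y ^ (-(α + 1))) ν) :
    Integrable (fun p : ℝ × Y => (2 * p.1) ^ α * Real.exp (-(2 * σ p.2 * p.1)) * φ p.2)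
      (μ₊.prod ν) := by
  have hmeas : AEStronglyMeasurable
      (fun p : ℝ × Y => (2 * p.1) ^ α * Real.exp (-(2 * σ p.2 * p.1)) * φ p.2)
      (μ₊.prod ν) :=
    (Measurable.aestronglyMeasurable (by fun_prop)).mul hφ.comp_snd
  refine (integrable_prod_iff' hmeas).2 ⟨?_, ?_⟩
  · filter_upwards [hσ0] with y hy
    exact (integrableOn_Ioi_rpow_mul_exp_neg hα hy).mul_const _
  · refine (hint.norm.const_mul (1 / 2 * Real.Gamma (α + 1))).congr ?_
    filter_upwards [hσ0] with y hy
    calc _ = 1 / 2 * (σ y ^ (-(α + 1)) * upperGamma (α + 1) (2 * 0 * σ y)) * ‖φ y‖ := by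
          rw [mul_zero, zero_mul, upperGamma_zero (by linarith), norm_mul,
            Real.norm_of_nonneg (Real.rpow_nonneg hy.le _)]
          ring
      _ = ∫ u in Ioi 0, ‖(2 * u) ^ α * Real.exp (-(2 * σ y * u)) * φ y‖ := by
          rw [← integral_Ioi_rpow_mul_exp_neg α hy le_rfl, ← integral_mul_const]
          refine setIntegral_congr_fun measurableSet_Ioi fun u (hu : 0 < u) => ?_
          rw [norm_mul, Real.norm_of_nonneg (show 0 ≤ (2 * u) ^ α * Real.exp _ by positivity)]

lemma setIntegral_rpow_mul_exp_neg_mul_prod {Y : Type*} [MeasurableSpace Y] {ν : Measure Y}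
    [SFinite ν] {σ φ : Y → ℝ} (hα : -1 < α) (hσ : Measurable σ) (hσ0 : ∀ᵐ y ∂ν, 0 < σ y)
    (hφ : AEStronglyMeasurable φ ν) (hint : Integrable (fun y => φ y * σ y ^ (-(α + 1))) ν)
    {c : ℝ} (hc : 0 ≤ c) (D : Set Y) :
    ∫ p in Ioi c ×ˢ D, (2 * p.1) ^ α * Real.exp (-(2 * σ p.2 * p.1)) * φ p.2
        ∂μ₊.prod ν
      = 1 / 2 * ∫ y in D, φ y * σ y ^ (-(α + 1)) * upperGamma (α + 1) (2 * c * σ y) ∂ν := by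
  have hprod := (integrable_rpow_mul_exp_neg_mul_prod hα hσ hσ0 hφ hint).integrableOn
    (s := Ioi c ×ˢ D)
  rw [IntegrableOn, ← Measure.prod_restrict] at hprod
  rw [← Measure.prod_restrict, integral_prod_symm _ hprod, ← integral_const_mul,
    Measure.restrict_restrict_of_subset (Ioi_subset_Ioi hc)]
  refine integral_congr_ae ?_
  filter_upwards [ae_restrict_of_ae hσ0] with y hy
  rw [integral_mul_const, integral_Ioi_rpow_mul_exp_neg α hy hc]
  ring

lemma rpow_mul_exp_neg_le {b q t : ℝ} (hb : 0 < b) (hq : 0 < q) (ht : 0 ≤ t) :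
    t ^ b * Real.exp (-(q * t)) ≤ (b / q) ^ b := by
  have hlin : t ≤ b / q * Real.exp (q * t / b) := by
    calc t = b / q * (q * t / b) := by field_simp
      _ ≤ b / q * Real.exp (q * t / b) := by
        gcongr
        linarith [Real.add_one_le_exp (q * t / b)]
  calc t ^ b * Real.exp (-(q * t))
      ≤ (b / q * Real.exp (q * t / b)) ^ b * Real.exp (-(q * t)) := by gcongr
    _ = (b / q) ^ b := by
      rw [Real.mul_rpow (by positivity) (by positivity), ← Real.exp_mul, mul_assoc,
        ← Real.exp_add, div_mul_cancel₀ _ hb.ne', add_neg_cancel, Real.exp_zero, mul_one]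

lemma integrableOn_mul_exp_neg_of_rpow {φ : ℝ → ℝ} {b q : ℝ} (hb : 0 < b) (hq : 0 < q)
    (hφ : IntegrableOn (fun t => φ t * t ^ (-b)) (Ioi 0)) :
    IntegrableOn (fun t => φ t * Real.exp (-(q * t))) (Ioi 0) := by
  have hbdd : ∀ᵐ t ∂μ₊, ‖t ^ b * Real.exp (-(q * t))‖ ≤ (b / q) ^ b := by
    filter_upwards [ae_restrict_mem measurableSet_Ioi] with t (ht : 0 < t)
    rw [Real.norm_of_nonneg (by positivity)]
    exact rpow_mul_exp_neg_le hb hq ht.le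
  refine IntegrableOn.congr_fun (hφ.mul_bdd (Measurable.aestronglyMeasurable (by fun_prop)) hbdd)
    (fun t (ht : 0 < t) => ?_) measurableSet_Ioi
  rw [mul_assoc, ← mul_assoc (t ^ (-b)), ← Real.rpow_add ht, neg_add_cancel, Real.rpow_zero,
    one_mul]

lemma aestronglyMeasurable_of_integrableOn_mul_rpow {b : ℝ}
    (hL1 : IntegrableOn (fun s => f s * s ^ (-b)) (Ioi 0)) :
    AEStronglyMeasurable f μ₊ := by
  have hpow : Measurable fun s : ℝ => s ^ b := by fun_prop
  refine (hL1.aestronglyMeasurable.mul hpow.aestronglyMeasurable).congr ?_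
  filter_upwards [ae_restrict_mem measurableSet_Ioi] with s (hs : 0 < s)
  rw [Pi.mul_apply, mul_assoc, ← Real.rpow_add hs, neg_add_cancel, Real.rpow_zero, mul_one]

lemma mul_exp_neg_sq (a q t : ℝ) :
    (a * Real.exp (-(q * t))) ^ 2 = a ^ 2 * Real.exp (-(2 * q * t)) := by
  rw [mul_pow, ← Real.exp_nat_mul]
  congr 2
  push_cast
  ring

lemma memLp_two_mul_exp_neg_of_rpow {b q : ℝ} (hb : 0 < b) (hq : 0 < q)
    (hL1 : IntegrableOn (fun s => f s * s ^ (-b)) (Ioi 0))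
    (hL2 : IntegrableOn (fun s => f s ^ 2 * s ^ (-b)) (Ioi 0)) :
    MemLp (fun t => f t * Real.exp (-(q * t))) 2 μ₊ := by
  rw [memLp_two_iff_integrable_sq
    (integrableOn_mul_exp_neg_of_rpow hb hq hL1).aestronglyMeasurable]
  simp_rw [mul_exp_neg_sq]
  exact integrableOn_mul_exp_neg_of_rpow hb (by positivity) hL2

end GammaWeight

section TripleIntegral

variable {α x : ℝ} {f : ℝ → ℝ}

lemma exp_mul_resolventKernel {u : ℝ} (hu : u ≠ x) (t s : ℝ) :
    Real.exp (-((x + u) * t)) * (Real.exp (-((x + u) * s)) * resolventKernel (x - u) (t - s))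
      = Real.exp (-(2 * s * u)) * Real.exp (-(2 * x * t)) *
        ((if s ≤ t then 1 else 0) - (if x < u then 1 else 0)) := by
  have hexp : Real.exp (-((x + u) * t)) * (Real.exp (-((x + u) * s)) *
      Real.exp (-((x - u) * (t - s)))) = Real.exp (-(2 * s * u)) * Real.exp (-(2 * x * t)) := by
    simp only [← Real.exp_add]
    congr 1
    ring
  rcases hu.lt_or_gt with hux | hux <;> rcases le_or_gt s t with hst | hts
  · simp [resolventKernel, hux, hux.le, hst, hexp]
  · simp [resolventKernel, hux, hux.le, not_le.2 hts]
  · simp [resolventKernel, hux, hux.not_gt, hst]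
  · simp [resolventKernel, hux, hux.not_gt, not_le.2 hts, hts, hexp]

/-- The real integrand in the variables `(u, (t, s))` to which the integral of the Berezin kernel
against `1 / (z - w)` reduces once `Im w` has been integrated out; here `u = Re w`, `x = Re z`. -/
noncomputable def gammaIntegrand (α x : ℝ) (f : ℝ → ℝ) (p : ℝ × ℝ × ℝ) : ℝ :=
  (2 * p.1) ^ α * Real.exp (-(2 * p.2.2 * p.1)) *
    (f p.2.1 * Real.exp (-(2 * x * p.2.1)) * f p.2.2)

lemma rpow_mul_resolventKernel_eq_indicator_sub {u : ℝ} (hu : 0 < u) (hux : u ≠ x) (t s : ℝ) :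
    (2 * u) ^ α * (f t * Real.exp (-((x + u) * t)) *
        (f s * Real.exp (-((x + u) * s)) * resolventKernel (x - u) (t - s)))
      = (Ioi 0 ×ˢ {y | y.2 ≤ y.1}).indicator (gammaIntegrand α x f) (u, (t, s))
        - (Ioi x ×ˢ univ).indicator (gammaIntegrand α x f) (u, (t, s)) := by
  calc _ = (2 * u) ^ α * f t * f s * (Real.exp (-((x + u) * t)) *
        (Real.exp (-((x + u) * s)) * resolventKernel (x - u) (t - s))) := by ring
    _ = gammaIntegrand α x f (u, (t, s)) *
        ((if s ≤ t then 1 else 0) - (if x < u then 1 else 0)) := by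
      rw [exp_mul_resolventKernel hux, gammaIntegrand]
      ring
    _ = _ := by simp [indicator, hu, mul_sub]



lemma ae_snd_pos :
    ∀ᵐ y : ℝ × ℝ ∂μ₊.prod μ₊, 0 < y.2 :=
  Measure.quasiMeasurePreserving_snd.ae (ae_restrict_mem measurableSet_Ioi)

lemma integrable_mul_exp_neg_mul_rpow_prod (hα : -1 < α) (hx : 0 < x)
    (hL1 : IntegrableOn (fun s => f s * s ^ (-(α + 1))) (Ioi 0)) :
    Integrable (fun y : ℝ × ℝ => f y.1 * Real.exp (-(2 * x * y.1)) * f y.2 * y.2 ^ (-(α + 1)))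
      (μ₊.prod μ₊) := by
  simpa only [mul_assoc] using!
    (integrableOn_mul_exp_neg_of_rpow (q := 2 * x) (by linarith) (by positivity) hL1).mul_prod hL1

lemma aestronglyMeasurable_mul_exp_neg_mul
    (hf : AEStronglyMeasurable f μ₊) :
    AEStronglyMeasurable (fun y : ℝ × ℝ => f y.1 * Real.exp (-(2 * x * y.1)) * f y.2)
      (μ₊.prod μ₊) :=
  (hf.comp_fst.mul (Measurable.aestronglyMeasurable (by fun_prop))).mul hf.comp_snd

lemma integrable_gammaIntegrand (hα : -1 < α) (hx : 0 < x)
    (hL1 : IntegrableOn (fun s => f s * s ^ (-(α + 1))) (Ioi 0)) :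
    Integrable (gammaIntegrand α x f) (μ₊.prod (μ₊.prod μ₊)) :=
  integrable_rpow_mul_exp_neg_mul_prod hα measurable_snd ae_snd_pos
    (aestronglyMeasurable_mul_exp_neg_mul (aestronglyMeasurable_of_integrableOn_mul_rpow hL1))
    (integrable_mul_exp_neg_mul_rpow_prod hα hx hL1)

lemma setIntegral_gammaIntegrand (hα : -1 < α) (hx : 0 < x)
    (hL1 : IntegrableOn (fun s => f s * s ^ (-(α + 1))) (Ioi 0)) {c : ℝ} (hc : 0 ≤ c)
    (D : Set (ℝ × ℝ)) :
    ∫ p in Ioi c ×ˢ D, gammaIntegrand α x f p ∂μ₊.prod (μ₊.prod μ₊)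
      = 1 / 2 * ∫ y in D, f y.1 * Real.exp (-(2 * x * y.1)) * f y.2 * y.2 ^ (-(α + 1)) *
          upperGamma (α + 1) (2 * c * y.2) ∂μ₊.prod μ₊ :=
  setIntegral_rpow_mul_exp_neg_mul_prod hα measurable_snd ae_snd_pos
    (aestronglyMeasurable_mul_exp_neg_mul (aestronglyMeasurable_of_integrableOn_mul_rpow hL1))
    (integrable_mul_exp_neg_mul_rpow_prod hα hx hL1) hc D

lemma setIntegral_gammaIntegrand_triangle (hα : -1 < α) (hx : 0 < x)
    (hL1 : IntegrableOn (fun s => f s * s ^ (-(α + 1))) (Ioi 0)) :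
    ∫ p in Ioi 0 ×ˢ {y | y.2 ≤ y.1}, gammaIntegrand α x f p ∂μ₊.prod (μ₊.prod μ₊)
      = 1 / 2 * ∫ t in Ioi 0, ∫ s in Ioc 0 t, f s * f t * Real.exp (-(2 * x * t)) *
          s ^ (-(α + 1)) * Real.Gamma (α + 1) := by
  have hD : MeasurableSet {y : ℝ × ℝ | y.2 ≤ y.1} := measurableSet_le measurable_snd measurable_fst
  rw [setIntegral_gammaIntegrand hα hx hL1 le_rfl, ← integral_indicator hD]
  simp_rw [mul_zero, zero_mul, upperGamma_zero (show 0 < α + 1 by linarith)]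
  rw [integral_prod _ (((integrable_mul_exp_neg_mul_rpow_prod hα hx hL1).mul_const _).indicator hD)]
  congr 2 with t
  rw [← Ioi_inter_Iic, ← setIntegral_indicator measurableSet_Iic]
  congr 1 with s
  simp only [indicator, mem_ofPred_eq, mem_Iic]
  split_ifs <;> ring

lemma setIntegral_gammaIntegrand_univ (hα : -1 < α) (hx : 0 < x)
    (hL1 : IntegrableOn (fun s => f s * s ^ (-(α + 1))) (Ioi 0)) :
    ∫ p in Ioi x ×ˢ univ, gammaIntegrand α x f p ∂μ₊.prod (μ₊.prod μ₊)
      = 1 / 2 * ((∫ t in Ioi 0, f t * Real.exp (-(2 * x * t))) *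
          ∫ s in Ioi 0, f s * s ^ (-(α + 1)) * upperGamma (α + 1) (2 * x * s)) := by
  rw [setIntegral_gammaIntegrand hα hx hL1 hx.le, Measure.restrict_univ, ← integral_prod_mul]
  simp only [mul_assoc]

lemma integral_rpow_mul_integral_resolventKernel (hα : -1 < α) (hx : 0 < x)
    (hL1 : IntegrableOn (fun s => f s * s ^ (-(α + 1))) (Ioi 0)) :
    ∫ u in Ioi 0, (2 * u) ^ α * ∫ t in Ioi 0, ∫ s in Ioi 0, f t * Real.exp (-((x + u) * t)) *
        (f s * Real.exp (-((x + u) * s)) * resolventKernel (x - u) (t - s))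
      = 1 / 2 * (∫ t in Ioi 0, ∫ s in Ioc 0 t, f s * f t * Real.exp (-(2 * x * t)) *
          s ^ (-(α + 1)) * Real.Gamma (α + 1))
        - 1 / 2 * ((∫ t in Ioi 0, f t * Real.exp (-(2 * x * t))) *
          ∫ s in Ioi 0, f s * s ^ (-(α + 1)) * upperGamma (α + 1) (2 * x * s)) := by
  have hint := integrable_gammaIntegrand hα hx hL1
  have htri : MeasurableSet (Ioi (0 : ℝ) ×ˢ {y : ℝ × ℝ | y.2 ≤ y.1}) :=
    measurableSet_Ioi.prod (measurableSet_le measurable_snd measurable_fst)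
  have hright : MeasurableSet (Ioi x ×ˢ (univ : Set (ℝ × ℝ))) :=
    measurableSet_Ioi.prod MeasurableSet.univ
  have hdiff := (hint.indicator htri).sub (hint.indicator hright)
  rw [← setIntegral_gammaIntegrand_triangle hα hx hL1,
    ← setIntegral_gammaIntegrand_univ hα hx hL1,
    ← integral_indicator htri, ← integral_indicator hright,
    ← integral_sub' (hint.indicator htri) (hint.indicator hright), integral_prod _ hdiff]
  refine integral_congr_ae ?_
  filter_upwards [hdiff.prod_right_ae, ae_restrict_mem measurableSet_Ioi,
    ae_restrict_of_ae (Measure.ae_ne volume x)] with u hdiff_u (hu : 0 < u) hux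
  rw [integral_prod _ hdiff_u]
  simp_rw [← integral_const_mul]
  congr 1 with t
  congr 1 with s
  exact rpow_mul_resolventKernel_eq_indicator_sub hu hux t s

end TripleIntegral

section BerezinKernel

variable {α x : ℝ} {f : ℝ → ℝ}

lemma integrable_rpow_mul_integral_sq (hα : -1 < α) (hx : 0 < x)
    (hL1 : IntegrableOn (fun s => f s * s ^ (-(α + 1))) (Ioi 0))
    (hL2 : IntegrableOn (fun s => f s ^ 2 * s ^ (-(α + 1))) (Ioi 0)) :
    Integrable (fun u => (2 * u) ^ α * ∫ t in Ioi 0, (f t * Real.exp (-((x + u) * t))) ^ 2)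
      μ₊ := by
  have hf := aestronglyMeasurable_of_integrableOn_mul_rpow hL1
  have hexp : ∀ᵐ t ∂μ₊, ‖Real.exp (-(2 * x * t))‖ ≤ 1 := by
    filter_upwards [ae_restrict_mem measurableSet_Ioi] with t (ht : 0 < t)
    rw [Real.norm_of_nonneg (Real.exp_pos _).le, Real.exp_le_one_iff, neg_nonpos]
    positivity
  have hint : Integrable (fun t => f t ^ 2 * Real.exp (-(2 * x * t)) * t ^ (-(α + 1))) μ₊ := by
    simpa only [mul_right_comm] using
      Integrable.mul_bdd hL2 (Measurable.aestronglyMeasurable (by fun_prop)) hexp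
  have hprod (u : ℝ) : (2 * u) ^ α * ∫ t in Ioi 0, (f t * Real.exp (-((x + u) * t))) ^ 2
      = ∫ t in Ioi 0, (2 * u) ^ α * Real.exp (-(2 * t * u)) *
          (f t ^ 2 * Real.exp (-(2 * x * t))) := by
    rw [← integral_const_mul]
    congr 1 with t
    rw [mul_exp_neg_sq, show 2 * (x + u) * t = 2 * t * u + 2 * x * t by ring, neg_add,
      Real.exp_add]
    ring
  simp_rw [hprod]
  exact (integrable_rpow_mul_exp_neg_mul_prod hα measurable_id
    (ae_restrict_mem (s := Ioi (0 : ℝ)) measurableSet_Ioi)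
    ((hf.pow 2).mul (Measurable.aestronglyMeasurable (by fun_prop))) hint).integral_prod_left

lemma integrable_rpow_mul_norm_laplaceTransform_sq (hα : -1 < α) (hx : 0 < x)
    (hL1 : IntegrableOn (fun s => f s * s ^ (-(α + 1))) (Ioi 0))
    (hL2 : IntegrableOn (fun s => f s ^ 2 * s ^ (-(α + 1))) (Ioi 0)) :
    Integrable (fun p : ℝ × ℝ =>
      (2 * p.1) ^ α * ‖laplaceTransform f ((x + p.1 : ℝ) + p.2 * I)‖ ^ 2) (μ₊.prod volume) := by
  have hα1 : 0 < α + 1 := by linarith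
  have hL := measurable_laplaceTransform (aestronglyMeasurable_of_integrableOn_mul_rpow hL1)
  refine (integrable_prod_iff (Measurable.aestronglyMeasurable (by fun_prop))).2 ⟨?_, ?_⟩
  · filter_upwards [ae_restrict_mem measurableSet_Ioi] with u (hu : 0 < u)
    exact (integrable_norm_laplaceTransform_sq
      (integrableOn_mul_exp_neg_of_rpow hα1 (by positivity) hL1)
      (memLp_two_mul_exp_neg_of_rpow hα1 (by positivity) hL1 hL2)).const_mul _
  · refine ((integrable_rpow_mul_integral_sq hα hx hL1 hL2).const_mul (2 * Real.pi)).congr ?_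
    filter_upwards [ae_restrict_mem measurableSet_Ioi] with u (hu : 0 < u)
    have hnorm (η : ℝ) : ‖(2 * u) ^ α * ‖laplaceTransform f ((x + u : ℝ) + η * I)‖ ^ 2‖
        = (2 * u) ^ α * ‖laplaceTransform f ((x + u : ℝ) + η * I)‖ ^ 2 :=
      Real.norm_of_nonneg (by positivity)
    simp_rw [hnorm]
    rw [integral_const_mul, integral_norm_laplaceTransform_sq
      (integrableOn_mul_exp_neg_of_rpow hα1 (by positivity) hL1)
      (memLp_two_mul_exp_neg_of_rpow hα1 (by positivity) hL1 hL2), mul_left_comm]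

/-- The kernel `K_f` attached to an arbitrary density `f`; it specialises to `hardWallK α` for
`f = hardWallDensityFn α`. -/
noncomputable def laplaceKernel (α : ℝ) (f : ℝ → ℝ) (z w : ℂ) : ℂ :=
  (((2 * z.re) ^ (α / 2) * (2 * w.re) ^ (α / 2) : ℝ) : ℂ) *
    laplaceTransform f (z + (starRingEnd ℂ) w)

/-- The Cauchy transform over the right half-plane of the Berezin kernel
`|K_f(z, w)|² / K_f(z, z)` with respect to `dxdy/π`, evaluated at the base point `z`. -/
noncomputable def laplaceCauchy (α : ℝ) (f : ℝ → ℝ) (z : ℂ) : ℂ :=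
  (1 / (Real.pi : ℂ)) * ∫ w in {w : ℂ | 0 < w.re},
    ((‖laplaceKernel α f z w‖ ^ 2 : ℝ) : ℂ) / laplaceKernel α f z z * (1 / (z - w))

/-- The coordinates `w = u + i(y - η)`. For `y = Im z` they turn `z + conj w` into
`(Re z + u) + iη` and `z - w` into `(Re z - u) + iη`. -/
noncomputable def halfPlaneCoordinates (y : ℝ) : ℝ × ℝ ≃ᵐ ℂ :=
  ((MeasurableEquiv.refl ℝ).prodCongr (MeasurableEquiv.subLeft y)).trans
    measurableEquivRealProd.symm

lemma halfPlaneCoordinates_apply (y u η : ℝ) :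
    halfPlaneCoordinates y (u, η) = u + (y - η : ℝ) * I := by
  apply Complex.ext <;>
    simp [halfPlaneCoordinates, MeasurableEquiv.prodCongr, MeasurableEquiv.subLeft]

lemma measurePreserving_halfPlaneCoordinates (y : ℝ) :
    MeasurePreserving (halfPlaneCoordinates y) (μ₊.prod volume)
      (volume.restrict {w : ℂ | 0 < w.re}) := by
  have hpre : measurableEquivRealProd.symm ⁻¹' {w : ℂ | 0 < w.re} = Ioi (0 : ℝ) ×ˢ univ := by
    ext p
    simp
  have hhalf := volume_preserving_equiv_real_prod.symm.restrict_preimage_emb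
    measurableEquivRealProd.symm.measurableEmbedding {w : ℂ | 0 < w.re}
  rw [hpre, Measure.volume_eq_prod, ← Measure.prod_restrict, Measure.restrict_univ] at hhalf
  exact hhalf.comp ((MeasurePreserving.id _).prod (Measure.measurePreserving_sub_left volume y))

lemma norm_laplaceKernel (α : ℝ) (f : ℝ → ℝ) {z w : ℂ} (hz : 0 ≤ z.re) (hw : 0 ≤ w.re) :
    ‖laplaceKernel α f z w‖ = (2 * z.re) ^ (α / 2) * (2 * w.re) ^ (α / 2) *
      ‖laplaceTransform f (z + (starRingEnd ℂ) w)‖ := by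
  rw [laplaceKernel, norm_mul, norm_real, Real.norm_of_nonneg (by positivity)]

lemma norm_laplaceKernel_halfPlaneCoordinates_sq (α : ℝ) (f : ℝ → ℝ) {z : ℂ} (hz : 0 ≤ z.re)
    {u : ℝ} (hu : 0 ≤ u) (η : ℝ) :
    ‖laplaceKernel α f z (halfPlaneCoordinates z.im (u, η))‖ ^ 2
      = (2 * z.re) ^ α *
        ((2 * u) ^ α * ‖laplaceTransform f ((z.re + u : ℝ) + η * I)‖ ^ 2) := by
  have harg : z + (starRingEnd ℂ) (u + (z.im - η : ℝ) * I) = (z.re + u : ℝ) + η * I := by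
    apply Complex.ext <;> simp
  have hsq {y : ℝ} (hy : 0 ≤ y) : (y ^ (α / 2)) ^ 2 = y ^ α := by
    rw [← Real.rpow_mul_natCast hy, Nat.cast_ofNat, div_mul_cancel₀ _ two_ne_zero]
  rw [halfPlaneCoordinates_apply, norm_laplaceKernel α f hz (by simpa using hu), harg, mul_pow,
    mul_pow, hsq (by positivity), mul_assoc]
  simp [hsq (show 0 ≤ 2 * u by positivity)]

lemma sub_halfPlaneCoordinates (z : ℂ) (u η : ℝ) :
    z - halfPlaneCoordinates z.im (u, η) = (z.re - u : ℝ) + η * I := by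
  rw [halfPlaneCoordinates_apply]
  apply Complex.ext <;> simp

lemma integrableOn_norm_laplaceKernel_sq {z : ℂ} (hα : -1 < α) (hz : 0 < z.re)
    (hL1 : IntegrableOn (fun s => f s * s ^ (-(α + 1))) (Ioi 0))
    (hL2 : IntegrableOn (fun s => f s ^ 2 * s ^ (-(α + 1))) (Ioi 0)) :
    IntegrableOn (fun w => ‖laplaceKernel α f z w‖ ^ 2) {w : ℂ | 0 < w.re} := by
  refine ((measurePreserving_halfPlaneCoordinates z.im).integrable_comp_emb
    (halfPlaneCoordinates z.im).measurableEmbedding).1 ?_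
  refine ((integrable_rpow_mul_norm_laplaceTransform_sq hα hz hL1 hL2).const_mul
    ((2 * z.re) ^ α)).congr ?_
  filter_upwards [Measure.quasiMeasurePreserving_fst.ae (ae_restrict_mem measurableSet_Ioi)]
    with ⟨u, η⟩ (hu : 0 < u)
  exact (norm_laplaceKernel_halfPlaneCoordinates_sq α f hz.le hu.le η).symm

lemma exists_norm_laplaceKernel_le {z : ℂ} (hα : -1 < α) (hz : 0 < z.re)
    (hL1 : IntegrableOn (fun s => f s * s ^ (-(α + 1))) (Ioi 0)) :
    ∃ C, ∀ w ∈ Metric.ball z (z.re / 2), ‖laplaceKernel α f z w‖ ≤ C := by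
  have hcont : ContinuousOn (fun u : ℝ => (2 * u) ^ (α / 2)) (Icc (z.re / 2) (3 * z.re / 2)) :=
    (continuousOn_const.mul continuousOn_id).rpow_const fun u hu =>
      Or.inl (mul_pos two_pos ((half_pos hz).trans_le hu.1)).ne'
  obtain ⟨M, hM⟩ := isCompact_Icc.exists_bound_of_continuousOn hcont
  set N := ∫ t in Ioi 0, ‖f t * Real.exp (-(z.re * t))‖
  refine ⟨(2 * z.re) ^ (α / 2) * M * N, fun w hw => ?_⟩
  have hre : |w.re - z.re| < z.re / 2 := by
    rw [← sub_re]
    exact (abs_re_le_norm _).trans_lt (by simpa [dist_eq_norm] using hw)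
  obtain ⟨hlo, hhi⟩ := abs_lt.1 hre
  have hw0 : 0 < w.re := by linarith
  have hL : ‖laplaceTransform f (z + (starRingEnd ℂ) w)‖ ≤ N :=
    norm_laplaceTransform_le (by simpa using hw0.le)
      (integrableOn_mul_exp_neg_of_rpow (by linarith) hz hL1)
  have hpow : (2 * w.re) ^ (α / 2) ≤ M :=
    (le_abs_self _).trans (hM w.re ⟨by linarith, by linarith⟩)
  have hM0 : 0 ≤ M := (by positivity : 0 ≤ (2 * w.re) ^ (α / 2)).trans hpow
  rw [norm_laplaceKernel α f hz.le hw0.le]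
  gcongr

lemma integrableOn_norm_laplaceKernel_sq_mul_one_div_sub {z : ℂ} (hα : -1 < α) (hz : 0 < z.re)
    (hL1 : IntegrableOn (fun s => f s * s ^ (-(α + 1))) (Ioi 0))
    (hL2 : IntegrableOn (fun s => f s ^ 2 * s ^ (-(α + 1))) (Ioi 0)) :
    IntegrableOn (fun w => ((‖laplaceKernel α f z w‖ ^ 2 : ℝ) : ℂ) * (1 / (z - w)))
      {w : ℂ | 0 < w.re} := by
  obtain ⟨C, hC⟩ := exists_norm_laplaceKernel_le hα hz hL1
  refine integrableOn_mul_one_div_sub (C := C ^ 2) (half_pos hz)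
    (measurableSet_lt measurable_const measurable_re)
    (integrableOn_norm_laplaceKernel_sq hα hz hL1 hL2).ofReal fun w hw => ?_
  rw [norm_real, norm_pow, norm_norm]
  exact pow_le_pow_left₀ (norm_nonneg _) (hC w hw.2) 2

lemma setIntegral_norm_laplaceKernel_sq_mul_one_div_sub {z : ℂ} (hα : -1 < α) (hz : 0 < z.re)
    (hL1 : IntegrableOn (fun s => f s * s ^ (-(α + 1))) (Ioi 0))
    (hL2 : IntegrableOn (fun s => f s ^ 2 * s ^ (-(α + 1))) (Ioi 0)) :
    ∫ w in {w : ℂ | 0 < w.re}, ((‖laplaceKernel α f z w‖ ^ 2 : ℝ) : ℂ) * (1 / (z - w))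
      = (((2 * z.re) ^ α * (2 * Real.pi) * ∫ u in Ioi 0, (2 * u) ^ α *
          ∫ t in Ioi 0, ∫ s in Ioi 0, f t * Real.exp (-((z.re + u) * t)) *
            (f s * Real.exp (-((z.re + u) * s)) * resolventKernel (z.re - u) (t - s)) :
          ℝ) : ℂ) := by
  have hα1 : 0 < α + 1 := by linarith
  have hmp := measurePreserving_halfPlaneCoordinates z.im
  have hemb := (halfPlaneCoordinates z.im).measurableEmbedding
  have hint : Integrable (fun p => ((‖laplaceKernel α f z (halfPlaneCoordinates z.im p)‖ ^ 2 : ℝ)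
      : ℂ) * (1 / (z - halfPlaneCoordinates z.im p))) (μ₊.prod volume) :=
    (hmp.integrable_comp_emb hemb).2
      (integrableOn_norm_laplaceKernel_sq_mul_one_div_sub hα hz hL1 hL2)
  rw [← hmp.integral_comp hemb, integral_prod _ hint, ← integral_const_mul,
    ← integral_complex_ofReal]
  refine integral_congr_ae ?_
  filter_upwards [ae_restrict_mem measurableSet_Ioi,
    ae_restrict_of_ae (Measure.ae_ne volume z.re)] with u (hu : 0 < u) hux
  simp_rw [norm_laplaceKernel_halfPlaneCoordinates_sq α f hz.le hu.le, sub_halfPlaneCoordinates,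
    ← mul_assoc ((2 * z.re) ^ α), ofReal_mul ((2 * z.re) ^ α * (2 * u) ^ α), mul_assoc (ofReal _)]
  rw [integral_const_mul, integral_norm_laplaceTransform_sq_mul_one_div (sub_ne_zero.2 hux.symm)
    (integrableOn_mul_exp_neg_of_rpow hα1 (by positivity) hL1)
    (memLp_two_mul_exp_neg_of_rpow hα1 (by positivity) hL1 hL2), ← ofReal_mul]
  congr 1
  ring

lemma laplaceKernel_self (α : ℝ) (f : ℝ → ℝ) {z : ℂ} (hz : 0 < z.re) :
    laplaceKernel α f z z
      = (((2 * z.re) ^ α * ∫ t in Ioi 0, f t * Real.exp (-(2 * z.re * t)) : ℝ) : ℂ) := by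
  rw [laplaceKernel, ← Real.rpow_add (by positivity), add_halves, laplaceTransform,
    ofReal_mul _ (∫ t in _, _), ← integral_complex_ofReal]
  congr 2 with t
  rw [add_conj]
  push_cast
  congr 2
  ring

theorem hardWall_cauchy_decomposition_general (α : ℝ) (hα : -1 < α) (f : ℝ → ℝ)
    (hL1 : IntegrableOn (fun s => f s * s ^ (-(α + 1))) (Ioi 0))
    (hL2 : IntegrableOn (fun s => f s ^ 2 * s ^ (-(α + 1))) (Ioi 0))
    (z : ℂ) (hz : 0 < z.re) (hK : laplaceKernel α f z z ≠ 0) :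
    laplaceKernel α f z z * laplaceCauchy α f z
      = -(laplaceKernel α f z z *
          ((∫ s in Ioi (0 : ℝ), f s * s ^ (-(α + 1)) * upperGamma (α + 1) (2 * z.re * s) : ℝ) : ℂ))
        + (((2 * z.re) ^ α : ℝ) : ℂ) *
          ((∫ t in Ioi (0 : ℝ), ∫ s in Ioc (0 : ℝ) t, f s * f t * Real.exp (-(2 * z.re * t)) *
            s ^ (-(α + 1)) * Real.Gamma (α + 1) : ℝ) : ℂ) := by
  have hcancel : laplaceKernel α f z z * laplaceCauchy α f z = 1 / Real.pi *
      ∫ w in {w : ℂ | 0 < w.re}, ((‖laplaceKernel α f z w‖ ^ 2 : ℝ) : ℂ) * (1 / (z - w)) := by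
    rw [laplaceCauchy, mul_left_comm, ← integral_const_mul]
    congr 2 with w
    rw [← mul_assoc, mul_div_cancel₀ _ hK]
  rw [hcancel, setIntegral_norm_laplaceKernel_sq_mul_one_div_sub hα hz hL1 hL2,
    integral_rpow_mul_integral_resolventKernel hα hz hL1, laplaceKernel_self α f hz]
  -- `ring` would otherwise normalise the integrands, differently on the two sides
  generalize ∫ t in Ioi (0 : ℝ), ∫ s in Ioc (0 : ℝ) t, (_ : ℝ) = A
  push_cast
  field_simp
  ring

end BerezinKernel

section HardWallDensity

variable {α : ℝ}

lemma hardWallDensityFn_mul_rpow (α s : ℝ) :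
    hardWallDensityFn α s * s ^ (-(α + 1))
      = (Ioo 0 1).indicator (fun _ => (Real.Gamma (α + 1))⁻¹) s := by
  by_cases hs : s ∈ Ioo (0 : ℝ) 1
  · rw [hardWallDensityFn, if_pos hs, indicator_of_mem hs, div_mul_eq_mul_div,
      ← Real.rpow_add hs.1, add_neg_cancel, Real.rpow_zero, one_div]
  · rw [hardWallDensityFn, if_neg hs, indicator_of_notMem hs, zero_mul]

lemma integrableOn_hardWallDensityFn_mul_rpow (α : ℝ) :
    IntegrableOn (fun s => hardWallDensityFn α s * s ^ (-(α + 1))) (Ioi 0) := by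
  simp_rw [hardWallDensityFn_mul_rpow]
  exact ((integrable_indicator_iff measurableSet_Ioo).2 (by simp)).integrableOn

lemma norm_hardWallDensityFn_le (hα : -1 < α) (s : ℝ) :
    ‖hardWallDensityFn α s‖ ≤ (Real.Gamma (α + 1))⁻¹ := by
  have hGamma : 0 < Real.Gamma (α + 1) := Real.Gamma_pos_of_pos (by linarith)
  rw [hardWallDensityFn]
  split_ifs with hs
  · rw [Real.norm_of_nonneg (div_nonneg (Real.rpow_nonneg hs.1.le _) hGamma.le), ← one_div]
    gcongr
    exact Real.rpow_le_one hs.1.le hs.2.le (by linarith)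
  · simpa using hGamma.le

lemma integrableOn_hardWallDensityFn_sq_mul_rpow (hα : -1 < α) :
    IntegrableOn (fun s => hardWallDensityFn α s ^ 2 * s ^ (-(α + 1))) (Ioi 0) := by
  have hL1 := integrableOn_hardWallDensityFn_mul_rpow α
  simp_rw [sq, mul_assoc]
  exact Integrable.bdd_mul hL1 (aestronglyMeasurable_of_integrableOn_mul_rpow hL1)
    (Eventually.of_forall (norm_hardWallDensityFn_le hα))

lemma integral_hardWallDensityFn_mul_exp_neg_pos (hα : -1 < α) {q : ℝ} (hq : 0 < q) :
    0 < ∫ t in Ioi 0, hardWallDensityFn α t * Real.exp (-(q * t)) := by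
  have hα1 : 0 < α + 1 := by linarith
  have hpos {t : ℝ} (ht : t ∈ Ioo (0 : ℝ) 1) : 0 < hardWallDensityFn α t := by
    rw [hardWallDensityFn, if_pos ht]
    exact div_pos (Real.rpow_pos_of_pos ht.1 _) (Real.Gamma_pos_of_pos hα1)
  have hnonneg (t : ℝ) : 0 ≤ hardWallDensityFn α t * Real.exp (-(q * t)) := by
    by_cases ht : t ∈ Ioo (0 : ℝ) 1
    · exact (mul_pos (hpos ht) (Real.exp_pos _)).le
    · simp [hardWallDensityFn, ht]
  rw [setIntegral_pos_iff_support_of_nonneg_ae (Eventually.of_forall hnonneg)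
    (integrableOn_mul_exp_neg_of_rpow hα1 hq (integrableOn_hardWallDensityFn_mul_rpow α))]
  refine lt_of_lt_of_le ?_ (measure_mono (s := Ioo (0 : ℝ) 1) fun t ht =>
    ⟨(mul_pos (hpos ht) (Real.exp_pos _)).ne', ht.1⟩)
  simp

lemma laplaceKernel_hardWallDensityFn_self_ne_zero (hα : -1 < α) {z : ℂ} (hz : 0 < z.re) :
    laplaceKernel α (hardWallDensityFn α) z z ≠ 0 := by
  have hint := integral_hardWallDensityFn_mul_exp_neg_pos hα (q := 2 * z.re) (by positivity)
  rw [laplaceKernel_self α _ hz, ofReal_ne_zero]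
  positivity

end HardWallDensity

/-- The decomposition `R(z) C(z) = -L₁(z) + L₂(z)` of the Cauchy transform of the
    hard-wall Berezin kernel. -/
theorem hardWall_cauchy_decomposition (α : ℝ) (hα : -1 < α) (z : ℂ) (hz : 0 < z.re) :
    hardWallK α z z * hardWallCauchy α z = -hardWallL1 α z + hardWallL2 α z :=
  hardWall_cauchy_decomposition_general α hα (hardWallDensityFn α)
    (integrableOn_hardWallDensityFn_mul_rpow α) (integrableOn_hardWallDensityFn_sq_mul_rpow hα) z hz
    (laplaceKernel_hardWallDensityFn_self_ne_zero hα hz)
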